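/- Let N ≥ 1, let E = ℂ^N with the ℓ² inner product, let λ : Fin N → ℝ be nonnegative and monotone nondecreasing, let (ψ_k) be an orthonormal basis of E, and let ψ ∈ E be a unit vector with c_k = ⟨ψ_k, ψ⟩. Fix K ∈ ℕ, Δτ > 0, δ ∈ [0,1), an index m with Σ_{j ≤ m}|c_j|² ≥ 1 − δ, and set T = K·Δτ and C₁ = (Σ_{k ≤ m} λ_k⁴ |c_k|²)^{1/2}. Write AAP = Σ_k (cos(√(2Δτ λ_k)))^K c_k ψ_k and ITE = Σ_k exp(−T λ_k) c_k ψ_k. Then ITE ≠ 0, and if AAP ≠ 0, the normalized error satisfies ‖ AAP/‖AAP‖ − ITE/‖ITE‖ ‖ ≤ ( (4/3)·C₁·T·Δτ + 4√δ ) / ‖ITE‖. -/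

import Mathlib

open Finset

lemma aux_exp (x : ℝ) (hx : 0 ≤ x) : Real.exp (-x) ≤ 1 - x + x ^ 2 / 2 := by
  have h := Real.quadratic_le_exp_of_nonneg hx
  rw [Real.exp_neg]
  have hp : 0 < 1 + x + x ^ 2 / 2 := by positivity
  calc (Real.exp x)⁻¹ ≤ (1 + x + x ^ 2 / 2)⁻¹ := inv_anti₀ hp h
    _ ≤ _ := by
      rw [inv_eq_one_div, div_le_iff₀ hp]
      nlinarith [sq_nonneg (x ^ 2)]

lemma aux_cos (x : ℝ) (hx : 0 ≤ x) :
    |Real.cos (Real.sqrt (2 * x)) - Real.exp (-x)| ≤ (2 / 3) * x ^ 2 := by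
  have hy0 := Real.sqrt_nonneg (2 * x)
  have hy2 : Real.sqrt (2 * x) ^ 2 = 2 * x := Real.sq_sqrt (by positivity)
  set y := Real.sqrt (2 * x) with hy
  have h1 := Real.one_sub_sq_div_two_le_cos (x := y)
  have h2 := aux_exp x hx
  have h3 := Real.add_one_le_exp (-x)
  have h4 : Real.cos y ≤ 1 - x + (2 / 3) * x ^ 2 := by
    by_cases c1 : y ≤ 1
    · have h := Real.cos_bound (x := y) (by rw [abs_of_nonneg hy0]; exact c1)
      rw [abs_of_nonneg hy0] at h
      have h' := (abs_le.1 h).2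
      have : y ^ 4 = 4 * x ^ 2 := by
        calc y ^ 4 = (y ^ 2) ^ 2 := by ring
          _ = _ := by rw [hy2]; ring
      rw [this, hy2] at h'
      nlinarith [sq_nonneg x]
    · push Not at c1
      by_cases c2 : y ≤ 2
      · have := Real.cos_le_cos_of_nonneg_of_le_pi (x := 1) (y := y) (by norm_num)
          (by linarith [Real.pi_gt_three]) c1.le
        nlinarith [Real.cos_one_le, sq_nonneg (x - 3 / 4)]
      · push Not at c2
        have : 2 ≤ x := by nlinarith
        nlinarith [Real.cos_le_one y]
  rw [abs_le]
  constructor <;> nlinarith [sq_nonneg x]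

lemma aux_pow (a b : ℝ) (ha : |a| ≤ 1) (hb : |b| ≤ 1) (K : ℕ) :
    |a ^ K - b ^ K| ≤ K * |a - b| := by
  induction K with
  | zero => simp
  | succ n ih =>
    have e : a ^ (n + 1) - b ^ (n + 1) = a * (a ^ n - b ^ n) + b ^ n * (a - b) := by ring
    rw [e]
    refine (abs_add_le _ _).trans ?_
    rw [abs_mul, abs_mul, abs_pow]
    have h1 := mul_le_mul_of_nonneg_right ha (abs_nonneg (a ^ n - b ^ n))
    have h2 := mul_le_mul_of_nonneg_right (pow_le_one₀ (n := n) (abs_nonneg b) hb) (abs_nonneg (a - b))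
    push_cast
    linarith

lemma aux_norm {N : ℕ} (ψb : OrthonormalBasis (Fin N) ℂ (EuclideanSpace ℂ (Fin N)))
    (f : Fin N → ℂ) : ‖∑ k, f k • ψb k‖ ^ 2 = ∑ k, ‖f k‖ ^ 2 := by
  rw [← ψb.sum_sq_norm_inner_right]
  refine Finset.sum_congr rfl fun k _ => ?_
  rw [ψb.orthonormal.inner_right_fintype]

lemma aux_normalize {E : Type*} [NormedAddCommGroup E] [NormedSpace ℂ E] (u v : E)
    (hu : u ≠ 0) (hv : v ≠ 0) :
    ‖(‖u‖ : ℂ)⁻¹ • u - (‖v‖ : ℂ)⁻¹ • v‖ ≤ 2 * ‖u - v‖ / ‖v‖ := by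
  have hu' := norm_pos_iff.2 hu
  have hv' := norm_pos_iff.2 hv
  have e : (‖u‖ : ℂ)⁻¹ • u - (‖v‖ : ℂ)⁻¹ • v
      = (((‖u‖⁻¹ - ‖v‖⁻¹ : ℝ)) : ℂ) • u + (‖v‖ : ℂ)⁻¹ • (u - v) := by
    push_cast
    module
  rw [e]
  refine (norm_add_le _ _).trans ?_
  rw [norm_smul, norm_smul, norm_inv, Complex.norm_real, Complex.norm_real, norm_norm,
    Real.norm_eq_abs]
  have h : |‖u‖⁻¹ - ‖v‖⁻¹| * ‖u‖ = |‖v‖ - ‖u‖| / ‖v‖ := by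
    have : ‖u‖⁻¹ - ‖v‖⁻¹ = (‖v‖ - ‖u‖) / (‖u‖ * ‖v‖) := by field_simp
    rw [this, abs_div, abs_of_pos (mul_pos hu' hv')]
    field_simp
  rw [h]
  have h2 : |‖v‖ - ‖u‖| ≤ ‖u - v‖ := by
    rw [abs_sub_comm]; exact abs_norm_sub_norm_le u v
  have h3 : |‖v‖ - ‖u‖| / ‖v‖ ≤ ‖u - v‖ / ‖v‖ := by gcongr
  have : 2 * ‖u - v‖ / ‖v‖ = ‖u - v‖ / ‖v‖ + ‖v‖⁻¹ * ‖u - v‖ := by ring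
  rw [this]
  linarith

/-- Normalized error of the `K`-step alternative approximate PITE state `AAP` versus the
exact imaginary-time-evolved state `ITE = e^{−T𝓗}ψ`:  `ITE ≠ 0` and, if `AAP ≠ 0`,
`‖AAP/‖AAP‖ − ITE/‖ITE‖‖ ≤ ((4/3)C₁TΔτ + 4√δ)/‖ITE‖`. -/
theorem stmt_6 (N : ℕ) (hN : 1 ≤ N)
    (ψb : OrthonormalBasis (Fin N) ℂ (EuclideanSpace ℂ (Fin N)))
    (lam : Fin N → ℝ) (hlam : ∀ k, 0 ≤ lam k) (hmono : Monotone lam)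
    (ψ : EuclideanSpace ℂ (Fin N)) (hψ : ‖ψ‖ = 1)
    (c : Fin N → ℂ) (hc : ∀ k, c k = inner ℂ (ψb k) ψ)
    (K : ℕ) (Δτ : ℝ) (hΔτ : 0 < Δτ) (δ : ℝ) (hδ : δ ∈ Set.Ico (0:ℝ) 1)
    (m : Fin N) (hm : 1 - δ ≤ ∑ j ∈ Finset.Iic m, ‖c j‖ ^ 2)
    (T : ℝ) (hT : T = K * Δτ)
    (C₁ : ℝ) (hC₁ : C₁ = Real.sqrt (∑ k ∈ Finset.Iic m, lam k ^ 4 * ‖c k‖ ^ 2))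
    (AAP ITE : EuclideanSpace ℂ (Fin N))
    (hAAP : AAP = ∑ k, ((((Real.cos (Real.sqrt (2 * Δτ * lam k))) ^ K : ℝ) : ℂ) * c k) • ψb k)
    (hITE : ITE = ∑ k, (((Real.exp (-(T * lam k)) : ℝ) : ℂ) * c k) • ψb k) :
    ITE ≠ 0 ∧
    (AAP ≠ 0 →
      ‖(‖AAP‖ : ℂ)⁻¹ • AAP - (‖ITE‖ : ℂ)⁻¹ • ITE‖
        ≤ ((4 / 3) * C₁ * T * Δτ + 4 * Real.sqrt δ) / ‖ITE‖) := by
  have hT0 : 0 ≤ T := by rw [hT]; positivity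
  have hcsum : ∑ k, ‖c k‖ ^ 2 = 1 := by
    have := ψb.sum_sq_norm_inner_right ψ
    simp only [← hc] at this
    rw [this, hψ]; norm_num
  have hne : ITE ≠ 0 := by
    intro h0
    have h1 := aux_norm ψb (fun k => ((Real.exp (-(T * lam k)) : ℝ) : ℂ) * c k)
    rw [← hITE, h0, norm_zero] at h1
    have h2 : ∀ k, c k = 0 := by
      have h1' := h1.symm
      rw [zero_pow two_ne_zero, Finset.sum_eq_zero_iff_of_nonneg (fun _ _ => by positivity)] at h1'
      intro k
      have h3 := pow_eq_zero_iff two_ne_zero |>.1 (h1' k (Finset.mem_univ k))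
      rcases mul_eq_zero.1 (norm_eq_zero.1 h3) with h | h
      · exact absurd (Complex.ofReal_eq_zero.1 h) (Real.exp_pos _).ne'
      · exact h
    simp [h2] at hcsum
  refine ⟨hne, fun hA => (aux_normalize AAP ITE hA hne).trans ?_⟩
  suffices hmain : ‖AAP - ITE‖ ≤ (2 / 3) * C₁ * T * Δτ + 2 * Real.sqrt δ by
    gcongr
    linarith
  have hC0 : 0 ≤ C₁ := by rw [hC₁]; positivity
  have hC2 : C₁ ^ 2 = ∑ k ∈ Finset.Iic m, lam k ^ 4 * ‖c k‖ ^ 2 := by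
    rw [hC₁, Real.sq_sqrt (Finset.sum_nonneg fun _ _ => by positivity)]
  have hδ2 : Real.sqrt δ ^ 2 = δ := Real.sq_sqrt hδ.1
  have hδ0 := Real.sqrt_nonneg δ
  set g : Fin N → ℝ := fun k =>
    (Real.cos (Real.sqrt (2 * Δτ * lam k))) ^ K - Real.exp (-(T * lam k)) with hg
  have hx : ∀ k, 0 ≤ Δτ * lam k := fun k => mul_nonneg hΔτ.le (hlam k)
  have hexp : ∀ k, Real.exp (-(T * lam k)) = Real.exp (-(Δτ * lam k)) ^ K := fun k => by
    rw [← Real.exp_nat_mul, hT]; congr 1; ring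
  have he1 : ∀ k, |Real.exp (-(Δτ * lam k))| ≤ 1 := fun k => by
    rw [abs_of_pos (Real.exp_pos _), Real.exp_le_one_iff]; linarith [hx k]
  have hg1 : ∀ k, |g k| ≤ (2 / 3) * T * Δτ * lam k ^ 2 := fun k => by
    have h := aux_pow (Real.cos (Real.sqrt (2 * Δτ * lam k))) _ (Real.abs_cos_le_one _) (he1 k) K
    rw [← hexp] at h
    refine h.trans ?_
    have h2 := aux_cos _ (hx k)
    rw [← mul_assoc] at h2
    refine (mul_le_mul_of_nonneg_left h2 (Nat.cast_nonneg K)).trans (le_of_eq ?_)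
    rw [hT]; ring
  have hg2 : ∀ k, |g k| ≤ 2 := fun k => by
    have h1 : |(Real.cos (Real.sqrt (2 * Δτ * lam k))) ^ K| ≤ 1 := by
      rw [abs_pow]; exact pow_le_one₀ (abs_nonneg _) (Real.abs_cos_le_one _)
    have h2 : |Real.exp (-(T * lam k))| ≤ 1 := by
      rw [hexp, abs_pow]; exact pow_le_one₀ (abs_nonneg _) (he1 k)
    exact (abs_sub _ _).trans (by linarith)
  have hdiff : AAP - ITE = ∑ k, ((g k : ℂ) * c k) • ψb k := by
    rw [hAAP, hITE, ← Finset.sum_sub_distrib]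
    refine Finset.sum_congr rfl fun k _ => ?_
    rw [← sub_smul, ← sub_mul, hg]
    push_cast
    rfl
  have hsq : ‖AAP - ITE‖ ^ 2 = ∑ k, |g k| ^ 2 * ‖c k‖ ^ 2 := by
    rw [hdiff, aux_norm]
    refine Finset.sum_congr rfl fun k _ => ?_
    rw [norm_mul, Complex.norm_real, Real.norm_eq_abs, mul_pow]
  have hcompl := Finset.sum_add_sum_compl (Finset.Iic m) (fun k => ‖c k‖ ^ 2)
  have hs1 : ∑ k ∈ Finset.Iic m, |g k| ^ 2 * ‖c k‖ ^ 2 ≤ ((2 / 3) * C₁ * T * Δτ) ^ 2 := by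
    have : ((2 / 3) * C₁ * T * Δτ) ^ 2 = ((2 / 3) * T * Δτ) ^ 2 * C₁ ^ 2 := by ring
    rw [this, hC2, Finset.mul_sum]
    refine Finset.sum_le_sum fun k _ => ?_
    have h := pow_le_pow_left₀ (abs_nonneg _) (hg1 k) 2
    calc |g k| ^ 2 * ‖c k‖ ^ 2 ≤ ((2 / 3) * T * Δτ * lam k ^ 2) ^ 2 * ‖c k‖ ^ 2 := by gcongr
      _ = _ := by ring
  have hs2 : ∑ k ∈ (Finset.Iic m)ᶜ, |g k| ^ 2 * ‖c k‖ ^ 2 ≤ 4 * δ := by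
    calc ∑ k ∈ (Finset.Iic m)ᶜ, |g k| ^ 2 * ‖c k‖ ^ 2
        ≤ ∑ k ∈ (Finset.Iic m)ᶜ, 4 * ‖c k‖ ^ 2 := by
          refine Finset.sum_le_sum fun k _ => ?_
          have h := pow_le_pow_left₀ (abs_nonneg _) (hg2 k) 2
          have : |g k| ^ 2 ≤ 4 := by linarith
          gcongr
      _ ≤ 4 * δ := by rw [← Finset.mul_sum]; linarith
  have hsplit := Finset.sum_add_sum_compl (Finset.Iic m) (fun k => |g k| ^ 2 * ‖c k‖ ^ 2)
  have hA0 : 0 ≤ (2 / 3) * C₁ * T * Δτ := by positivity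
  refine (pow_le_pow_iff_left₀ (norm_nonneg _) (by positivity) two_ne_zero).1 ?_
  nlinarith [mul_nonneg hA0 hδ0]
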